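/- Let X be a smooth extremal surface of degree q+1 in ℙ³(k). Then the set of all stars on X has cardinality exactly (q³+1)(q²+1) = q⁵+q³+q²+1; equivalently, since each star point is the center of exactly one star, X has exactly (q³+1)(q²+1) star points. -/

import Mathlib

open Module

/-! Basic setup: `k` is an algebraically closed field of characteristic `p > 0`,
`q = p^e`.  We model ℙ³(k) via linear subspaces of `k⁴ = Fin 4 → k`:
points, lines and planes of ℙ³(k) are subspaces of dimension 1, 2 and 3
respectively.  A hypersurface cut out by a homogeneous form is recorded by its
affine cone in `k⁴`. -/

/-- The Frobenius form in 4 variables determined by a 4×4 matrix `A`: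
`∑ i j, A i j * x i ^ q * x j`, a homogeneous form of degree `q+1`. -/
def frobForm {k : Type*} [Field k] (q : ℕ) (A : Matrix (Fin 4) (Fin 4) k)
    (x : Fin 4 → k) : k :=
  ∑ i, ∑ j, A i j * x i ^ q * x j

/-- The affine cone in `k⁴` of the extremal surface in ℙ³(k) cut out by the
Frobenius form with matrix `A`; a point of ℙ³(k) lies on the surface iff its
homogeneous coordinate representatives lie in this set. -/
def extremalCone (k : Type*) [Field k] (q : ℕ) (A : Matrix (Fin 4) (Fin 4) k) :
    Set (Fin 4 → k) :=
  {x | frobForm q A x = 0}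

/-- A point of ℙ³(k): a 1-dimensional subspace of `k⁴`. -/
def IsPoint {k : Type*} [Field k] (c : Submodule k (Fin 4 → k)) : Prop :=
  finrank k c = 1

/-- A line of ℙ³(k): a 2-dimensional subspace of `k⁴`. -/
def IsLine {k : Type*} [Field k] (L : Submodule k (Fin 4 → k)) : Prop :=
  finrank k L = 2

/-- A plane of ℙ³(k): a 3-dimensional subspace of `k⁴`. -/
def IsPlane {k : Type*} [Field k] (H : Submodule k (Fin 4 → k)) : Prop :=
  finrank k H = 3

/-- `L` is a line lying on the surface with affine cone `X`. -/
def IsLineOn {k : Type*} [Field k] (X : Set (Fin 4 → k))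
    (L : Submodule k (Fin 4 → k)) : Prop :=
  IsLine L ∧ (L : Set (Fin 4 → k)) ⊆ X

/-- Two lines of ℙ³(k) meet iff the corresponding subspaces of `k⁴` intersect
nontrivially. -/
def MeetsLine {k : Type*} [Field k] (L M : Submodule k (Fin 4 → k)) : Prop :=
  L ⊓ M ≠ ⊥

/-- Two lines of ℙ³(k) are skew iff the corresponding subspaces of `k⁴`
intersect trivially. -/
def SkewLine {k : Type*} [Field k] (L M : Submodule k (Fin 4 → k)) : Prop :=
  L ⊓ M = ⊥

/-- `IsStarAt q X S c`: `S` is a star on the surface with affine cone `X`,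
centered at the point `c`, i.e. a set of `q+1` distinct lines on the surface
all passing through `c`. -/
def IsStarAt {k : Type*} [Field k] (q : ℕ) (X : Set (Fin 4 → k))
    (S : Set (Submodule k (Fin 4 → k))) (c : Submodule k (Fin 4 → k)) : Prop :=
  IsPoint c ∧ S.ncard = q + 1 ∧ ∀ L ∈ S, IsLineOn X L ∧ c ≤ L

/-- `S` is a star on the surface with affine cone `X`. -/
def IsStar {k : Type*} [Field k] (q : ℕ) (X : Set (Fin 4 → k))
    (S : Set (Submodule k (Fin 4 → k))) : Prop :=
  ∃ c, IsStarAt q X S c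

/-- `c` is a star point of the surface with affine cone `X`. -/
def IsStarPoint {k : Type*} [Field k] (q : ℕ) (X : Set (Fin 4 → k))
    (c : Submodule k (Fin 4 → k)) : Prop :=
  ∃ S, IsStarAt q X S c

/-- `H` is a star plane of the surface with affine cone `X`, centered at `c`:
the plane section `X ∩ H` is the union of a star centered at `c`. -/
def IsStarPlaneAt {k : Type*} [Field k] (q : ℕ) (X : Set (Fin 4 → k))
    (H c : Submodule k (Fin 4 → k)) : Prop :=
  IsPlane H ∧ ∃ S, IsStarAt q X S c ∧
    X ∩ (H : Set (Fin 4 → k)) = ⋃ L ∈ S, (L : Set (Fin 4 → k))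

/-- An element of `Aut(X)`: since every projective linear automorphism of
ℙ³(k) is represented by an invertible linear map of `k⁴` (uniquely up to
scalars, which act trivially on subspaces and preserve every cone), `g ∈
PGL(4,k)` with `g(X) = X` corresponds to a linear automorphism of `k⁴`
mapping the affine cone `X` onto itself. -/
def PreservesCone {k : Type*} [Field k] (X : Set (Fin 4 → k))
    (g : (Fin 4 → k) ≃ₗ[k] (Fin 4 → k)) : Prop :=
  (⇑g) '' X = X

/-! Let `σ` be the `q`-th power map and `B` the `σ`-sesquilinear form with matrix `A`, so that the
surface is `B x x = 0`. If two lines on the surface meet in the point spanned by `c`, then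
polarizing `B x x = 0` along them shows that the functionals `B c ·` and `B · c` both vanish on the
plane of the two lines; after rescaling, `c` is then Hermitian: `B y c = σ (B c y)` for all `y`.
Conversely, if `c` is Hermitian and isotropic, `B` induces a nondegenerate form on
`ker (B c) / ⟨c⟩`, and the lines through `c` on the surface are the zeros of this binary form, which
are `q + 1` in number. So the star points are the points spanned by isotropic Hermitian vectors, and
the star at such a point consists of all lines on the surface through it.

The Hermitian vectors are the fixed vectors of an injective `σ²`-semilinear map, so they span by
Lang's theorem, and a Gram-Schmidt argument yields an orthonormal basis. In its coordinates the
isotropic Hermitian vectors are the zeros of the Fermat form `∑ xᵢ ^ (q + 1)` over the field of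
`q ^ 2` elements, which are counted by recursion on the number of variables. -/

/-- `σ` is the Frobenius endomorphism `x ↦ x ^ q`, where `q > 1` is a power of the characteristic;
of the latter only the vanishing of `q` in `k` is recorded. -/
structure IsFrobeniusPower {k : Type*} [Field k] (σ : k →+* k) (q : ℕ) : Prop where
  map_eq_pow : ∀ x, σ x = x ^ q
  one_lt : 1 < q
  cast_eq_zero : (q : k) = 0

/-- The subfield of elements fixed by an endomorphism of a field. -/
abbrev fixedSubfield {k : Type*} [Field k] (σ : k →+* k) : Subfield k :=
  σ.eqLocusField (RingHom.id k)

section Frobenius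

open Polynomial

variable {k : Type*} [Field k] {σ : k →+* k} {q : ℕ}

lemma isFrobeniusPower_iterateFrobenius (p : ℕ) [Fact p.Prime] [CharP k p] {e : ℕ} (he : e ≠ 0) :
    IsFrobeniusPower (iterateFrobenius k p e) (p ^ e) where
  map_eq_pow := iterateFrobenius_def p e
  one_lt := Nat.one_lt_pow he (Fact.out : p.Prime).one_lt
  cast_eq_zero := by simp [he]

lemma ncard_zeros_eq_natDegree [IsAlgClosed k] {f : k[X]} (hf : f.Separable) :
    {x | f.eval x = 0}.ncard = f.natDegree := by
  have hroots : {x | f.eval x = 0} = f.rootSet k := by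
    ext x
    simp [mem_rootSet, hf.ne_zero]
  rw [hroots, ← Nat.card_coe_set_eq, Nat.card_eq_fintype_card]
  exact card_rootSet_eq_natDegree hf (IsAlgClosed.splits _)

lemma map_map_eq_of_map_mul_self_eq {a b : k} (hb : σ b = b) (h : σ a * a = b) :
    σ (σ a) = a := by
  rcases eq_or_ne a 0 with rfl | ha
  · simp
  refine mul_right_cancel₀ ((map_ne_zero σ).mpr ha) ?_
  rw [mul_comm a, h, ← map_mul, h, hb]

namespace IsFrobeniusPower

protected lemma comp (hσ : IsFrobeniusPower σ q) : IsFrobeniusPower (σ.comp σ) (q ^ 2) where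
  map_eq_pow x := by rw [RingHom.comp_apply, hσ.map_eq_pow, hσ.map_eq_pow, ← pow_mul, sq]
  one_lt := Nat.one_lt_pow two_ne_zero hσ.one_lt
  cast_eq_zero := by simp [hσ.cast_eq_zero]

lemma surjective [IsAlgClosed k] (hσ : IsFrobeniusPower σ q) : Function.Surjective σ := fun x ↦ by
  obtain ⟨y, hy⟩ := IsAlgClosed.exists_pow_nat_eq x (Nat.zero_lt_of_lt hσ.one_lt)
  exact ⟨y, by rw [hσ.map_eq_pow, hy]⟩

variable [IsAlgClosed k]

lemma exists_map_sub_self_eq (hσ : IsFrobeniusPower σ q) (c : k) : ∃ s, σ s - s = c := by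
  have hdeg : (X ^ q - X - C c : k[X]).natDegree = q := by
    rw [natDegree_sub_C, FiniteField.X_pow_card_sub_X_natDegree_eq k hσ.one_lt]
  obtain ⟨s, hs⟩ := IsAlgClosed.exists_root (X ^ q - X - C c) <|
    degree_ne_of_natDegree_ne (hdeg.trans_ne (Nat.ne_zero_of_lt hσ.one_lt))
  exact ⟨s, by simpa [hσ.map_eq_pow, sub_eq_zero] using hs⟩

lemma exists_ne_zero_map_eq_mul (hσ : IsFrobeniusPower σ q) {μ : k} (hμ : μ ≠ 0) :
    ∃ ν ≠ 0, σ ν = ν * μ := by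
  have hq : q - 1 ≠ 0 := (Nat.sub_pos_of_lt hσ.one_lt).ne'
  obtain ⟨ν, hν⟩ := IsAlgClosed.exists_pow_nat_eq μ (Nat.pos_of_ne_zero hq)
  refine ⟨ν, fun h ↦ hμ (by rw [← hν, h, zero_pow hq]), ?_⟩
  rw [hσ.map_eq_pow, ← hν, mul_pow_sub_one (Nat.ne_zero_of_lt hσ.one_lt)]

lemma card_fixedSubfield (hσ : IsFrobeniusPower σ q) : Nat.card (fixedSubfield σ) = q := by
  have hsep : (X ^ q - X : k[X]).Separable := by
    rw [separable_def]
    exact ⟨0, -1, by simp [derivative_X_pow, hσ.cast_eq_zero]⟩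
  rw [← FiniteField.X_pow_card_sub_X_natDegree_eq k hσ.one_lt, ← ncard_zeros_eq_natDegree hsep,
    ← Nat.card_coe_set_eq]
  congr! 3 with x
  simp [RingHom.eqLocusField, hσ.map_eq_pow, sub_eq_zero]

lemma finite_fixedSubfield (hσ : IsFrobeniusPower σ q) : Finite (fixedSubfield σ) :=
  Nat.finite_of_card_ne_zero <| hσ.card_fixedSubfield.trans_ne (Nat.ne_zero_of_lt hσ.one_lt)

lemma exists_map_map_eq_map_ne (hσ : IsFrobeniusPower σ q) : ∃ t, σ (σ t) = t ∧ σ t ≠ t := by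
  by_contra! h
  have := hσ.finite_fixedSubfield
  have hle : Nat.card (fixedSubfield (σ.comp σ)) ≤ Nat.card (fixedSubfield σ) :=
    Nat.card_mono (Set.toFinite (fixedSubfield σ : Set k)) h
  rw [hσ.comp.card_fixedSubfield, hσ.card_fixedSubfield] at hle
  nlinarith [hσ.one_lt]

lemma ncard_norm_eq (hσ : IsFrobeniusPower σ q) {b : k} (hb : b ≠ 0) :
    {a | σ a * a = b}.ncard = q + 1 := by
  have hsep : (X ^ (q + 1) - C b).Separable :=
    separable_X_pow_sub_C b (by simp [hσ.cast_eq_zero]) hb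
  rw [← natDegree_X_pow_sub_C (n := q + 1) (r := b), ← ncard_zeros_eq_natDegree hsep]
  simp [hσ.map_eq_pow, sub_eq_zero, pow_succ]

lemma exists_norm_eq (hσ : IsFrobeniusPower σ q) (b : k) : ∃ a, σ a * a = b := by
  obtain ⟨a, ha⟩ := IsAlgClosed.exists_pow_nat_eq b q.succ_pos
  exact ⟨a, by rw [hσ.map_eq_pow, ← pow_succ, ha]⟩

end IsFrobeniusPower

end Frobenius

section LangPolynomial

open Polynomial

variable {k : Type*} [Field k] {Q : ℕ}

/-- Fixed vectors of a Frobenius-semilinear map on a cyclic space `⟨v, φ v, …, φˢ v⟩` with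
`φˢ⁺¹ v = ∑ aᵢ φⁱ v` are governed by the equation `langPoly Q a s t = t`: given a root `t`, the
vector with coordinates `langPoly Q a i t` is fixed. -/
noncomputable def langPoly (Q : ℕ) (a : ℕ → k) : ℕ → k[X]
  | 0 => C (a 0) * X ^ Q
  | i + 1 => langPoly Q a i ^ Q + C (a (i + 1)) * X ^ Q

lemma natDegree_langPoly (hQ : 1 < Q) {a : ℕ → k} (ha : a 0 ≠ 0) (i : ℕ) :
    (langPoly Q a i).natDegree = Q ^ (i + 1) := by
  induction i with
  | zero => rw [langPoly, natDegree_C_mul_X_pow _ _ ha, zero_add, pow_one]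
  | succ i ih =>
    have hpow : (langPoly Q a i ^ Q).natDegree = Q ^ (i + 2) := by
      rw [natDegree_pow, ih, ← pow_succ']
    rw [langPoly, natDegree_add_eq_left_of_natDegree_lt, hpow]
    calc (C (a (i + 1)) * X ^ Q).natDegree ≤ Q := natDegree_C_mul_X_pow_le _ _
      _ < Q ^ (i + 2) := lt_self_pow₀ hQ (by lia)
      _ = _ := hpow.symm

lemma derivative_langPoly (hQ : (Q : k) = 0) (a : ℕ → k) (i : ℕ) :
    (langPoly Q a i).derivative = 0 := by
  cases i <;> simp [langPoly, derivative_pow, hQ]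

lemma exists_ne_zero_eval_langPoly_eq_self [IsAlgClosed k] (hQ : 1 < Q) (hQk : (Q : k) = 0)
    {a : ℕ → k} (ha : a 0 ≠ 0) (i : ℕ) : ∃ t ≠ 0, (langPoly Q a i).eval t = t := by
  have hlt : 1 < Q ^ (i + 1) := Nat.one_lt_pow i.succ_ne_zero hQ
  have hdeg : (langPoly Q a i - X).natDegree = Q ^ (i + 1) := by
    rw [natDegree_sub_eq_left_of_natDegree_lt, natDegree_langPoly hQ ha]
    rwa [natDegree_langPoly hQ ha, natDegree_X]
  have hsep : (langPoly Q a i - X).Separable := by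
    rw [separable_def]
    exact ⟨0, -1, by simp [derivative_langPoly hQk]⟩
  have hcard := (ncard_zeros_eq_natDegree hsep).trans hdeg
  obtain ⟨t, ht, ht0⟩ := Set.exists_ne_of_one_lt_ncard (hlt.trans_eq hcard.symm) 0
  exact ⟨t, ht0, by simpa [sub_eq_zero] using ht⟩

end LangPolynomial

section Lang

variable {k V : Type*} [Field k] [AddCommGroup V] [Module k V] {τ : k →+* k} {φ : V →ₛₗ[τ] V}

lemma exists_iterate_succ_eq_sum [FiniteDimensional k V] (hτ : Function.Surjective τ)
    (hφ : Function.Injective φ) {v : V} (hv : v ≠ 0) :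
    ∃ (s : ℕ) (a : ℕ → k), a 0 ≠ 0 ∧ LinearIndependent k (fun i : Fin (s + 1) ↦ φ^[i] v) ∧
      φ^[s + 1] v = ∑ i ∈ Finset.range (s + 1), a i • φ^[i] v := by
  obtain ⟨s, hs, hs'⟩ : ∃ s, LinearIndependent k (fun i : Fin (s + 1) ↦ φ^[i] v) ∧
      ¬ LinearIndependent k (fun i : Fin (s + 2) ↦ φ^[i] v) := by
    by_contra! h
    have hind (s : ℕ) : LinearIndependent k (fun i : Fin (s + 1) ↦ φ^[i] v) := by
      induction s with
      | zero => simpa using hv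
      | succ s ih => exact h s ih
    simpa using (hind (finrank k V)).fintype_card_le_finrank
  have hmem : φ^[s + 1] v ∈ Submodule.span k (Set.range fun i : Fin (s + 1) ↦ φ^[i] v) := by
    by_contra h
    exact hs' (linearIndependent_finSucc'.mpr ⟨hs, h⟩)
  obtain ⟨c, hc⟩ := (Submodule.mem_span_range_iff_exists_fun k).mp hmem
  let a (i : ℕ) : k := if h : i < s + 1 then c ⟨i, h⟩ else 0
  have hsum : φ^[s + 1] v = ∑ i ∈ Finset.range (s + 1), a i • φ^[i] v := by
    simp only [← hc, Finset.sum_range, a, Fin.is_lt, dite_true]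
  refine ⟨s, a, fun ha ↦ ?_, hs, hsum⟩
  choose b hb using fun i ↦ hτ (a (i + 1))
  have hφs : φ^[s] v = ∑ i ∈ Finset.range s, b i • φ^[i] v := hφ <| by
    rw [← Function.iterate_succ_apply' φ, hsum, Finset.sum_range_succ', ha, zero_smul, add_zero,
      map_sum]
    simp only [LinearMap.map_smulₛₗ, hb, Function.iterate_succ_apply']
  refine (linearIndependent_finSucc'.mp hs).2 ?_
  change φ^[s] v ∈ _
  rw [hφs]
  exact Submodule.sum_mem _ fun i hi ↦ Submodule.smul_mem _ _ <|
    Submodule.subset_span ⟨⟨i, Finset.mem_range.mp hi⟩, rfl⟩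

lemma mem_span_fixed_of_map_mem (hτ : Function.Surjective τ) (hφ : Function.Injective φ) {x : V}
    (hx : φ x ∈ Submodule.span k {x | φ x = x}) : x ∈ Submodule.span k {x | φ x = x} := by
  suffices ∀ f ∈ Submodule.span k {x | φ x = x}, ∃ y ∈ Submodule.span k {x | φ x = x}, φ y = f by
    obtain ⟨y, hy, hyx⟩ := this _ hx
    rwa [← hφ hyx]
  intro f hf
  induction hf using Submodule.closure_induction with
  | zero => exact ⟨0, zero_mem _, map_zero φ⟩
  | add f g _ _ hf hg =>
    obtain ⟨y, hy, rfl⟩ := hf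
    obtain ⟨z, hz, rfl⟩ := hg
    exact ⟨y + z, add_mem hy hz, map_add φ y z⟩
  | smul_mem c x hx =>
    obtain ⟨b, rfl⟩ := hτ c
    exact ⟨b • x, Submodule.smul_mem _ _ (Submodule.subset_span hx), by
      rw [LinearMap.map_smulₛₗ, show φ x = x from hx]⟩

variable [IsAlgClosed k] {Q : ℕ}

lemma exists_ne_zero_map_eq_self [FiniteDimensional k V] [Nontrivial V]
    (hτ : IsFrobeniusPower τ Q) (hφ : Function.Injective φ) : ∃ w ≠ 0, φ w = w := by
  obtain ⟨v, hv⟩ := exists_ne (0 : V)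
  obtain ⟨s, a, ha, hind, hsum⟩ := exists_iterate_succ_eq_sum hτ.surjective hφ hv
  obtain ⟨t, ht0, ht⟩ := exists_ne_zero_eval_langPoly_eq_self hτ.one_lt hτ.cast_eq_zero ha s
  let x (i : ℕ) : k := (langPoly Q a i).eval t
  have hx_zero : x 0 = a 0 * t ^ Q := by simp [x, langPoly]
  have hx_succ (i : ℕ) : x (i + 1) = x i ^ Q + a (i + 1) * t ^ Q := by simp [x, langPoly]
  refine ⟨∑ i ∈ Finset.range (s + 1), x i • φ^[i] v, fun hzero ↦ ?_, ?_⟩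
  · rw [Finset.sum_range] at hzero
    exact ht0 (ht.symm.trans (Fintype.linearIndependent_iff.mp hind _ hzero (Fin.last s)))
  · calc φ (∑ i ∈ Finset.range (s + 1), x i • φ^[i] v)
        = ∑ i ∈ Finset.range s, x i ^ Q • φ^[i + 1] v + t ^ Q • φ^[s + 1] v := by
          rw [map_sum, Finset.sum_range_succ]
          simp only [LinearMap.map_smulₛₗ, hτ.map_eq_pow, Function.iterate_succ_apply', x, ht]
      _ = ∑ i ∈ Finset.range s, (x i ^ Q + a (i + 1) * t ^ Q) • φ^[i + 1] v
            + (a 0 * t ^ Q) • v := by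
          simp only [hsum, Finset.sum_range_succ', smul_add, Finset.smul_sum, smul_smul, add_smul,
            Finset.sum_add_distrib, mul_comm (t ^ Q), Function.iterate_zero, id, add_assoc]
      _ = ∑ i ∈ Finset.range (s + 1), x i • φ^[i] v := by
          rw [Finset.sum_range_succ', hx_zero]
          simp only [hx_succ, Function.iterate_zero, id]

lemma exists_map_sub_self_eq_of_mem_span (hτ : IsFrobeniusPower τ Q) {f : V}
    (hf : f ∈ Submodule.span k {x | φ x = x}) :
    ∃ y ∈ Submodule.span k {x | φ x = x}, φ y - y = f := by
  induction hf using Submodule.closure_induction with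
  | zero => exact ⟨0, zero_mem _, by simp⟩
  | add f g _ _ hf hg =>
    obtain ⟨y, hy, rfl⟩ := hf
    obtain ⟨z, hz, rfl⟩ := hg
    exact ⟨y + z, add_mem hy hz, by rw [map_add]; abel⟩
  | smul_mem c x hx =>
    obtain ⟨b, rfl⟩ := hτ.exists_map_sub_self_eq c
    refine ⟨b • x, Submodule.smul_mem _ _ (Submodule.subset_span hx), ?_⟩
    rw [LinearMap.map_smulₛₗ, show φ x = x from hx, sub_smul]

-- A fixed vector of the map induced on the quotient by the span lifts to a fixed vector.
theorem span_fixed_eq_top [FiniteDimensional k V] (hτ : IsFrobeniusPower τ Q)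
    (hφ : Function.Injective φ) : Submodule.span k {x | φ x = x} = ⊤ := by
  set F := Submodule.span k {x | φ x = x}
  by_contra hne
  have hmap : F ≤ F.comap φ := Submodule.span_le.mpr fun x hx ↦
    Submodule.subset_span <| show φ (φ x) = φ x from congrArg φ hx
  have hinj : Function.Injective (F.mapQ F φ hmap) := by
    rw [← LinearMap.ker_eq_bot, Submodule.eq_bot_iff]
    refine fun x ↦ Submodule.Quotient.induction_on F x fun v hv ↦ ?_
    simp only [LinearMap.mem_ker, Submodule.mapQ_apply, Submodule.Quotient.mk_eq_zero] at hv ⊢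
    exact mem_span_fixed_of_map_mem hτ.surjective hφ hv
  have : Nontrivial (V ⧸ F) := Submodule.Quotient.nontrivial_iff.mpr hne
  obtain ⟨w, hw0, hw⟩ := exists_ne_zero_map_eq_self hτ hinj
  obtain ⟨v, rfl⟩ := F.mkQ_surjective w
  have hv : φ v - v ∈ F := (Submodule.Quotient.eq F).mp hw
  obtain ⟨y, hyF, hy⟩ := exists_map_sub_self_eq_of_mem_span hτ hv
  have hfix : v - y ∈ F := Submodule.subset_span <| by
    rw [Set.mem_ofPred_eq, map_sub, sub_eq_sub_iff_sub_eq_sub, hy]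
  exact hw0 ((Submodule.Quotient.mk_eq_zero F).mpr (by simpa using add_mem hfix hyF))

end Lang

section SesquilinearForm

variable {k V ι : Type*} [Field k] [AddCommGroup V] [Module k V] {σ : k →+* k} {q : ℕ}
  {B : V →ₛₗ[σ] V →ₗ[k] k}

/-- A vector `x` is Hermitian for the sesquilinear form `B` if `B y x` is the conjugate of `B x y`
for all `y`. The star points of a smooth extremal surface turn out to be its points spanned by a
Hermitian vector. -/
def IsHermitianVector (B : V →ₛₗ[σ] V →ₗ[k] k) (x : V) : Prop :=
  ∀ y, B y x = σ (B x y)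

namespace IsHermitianVector

variable {x y : V}

lemma add (hx : IsHermitianVector B x) (hy : IsHermitianVector B y) :
    IsHermitianVector B (x + y) := fun z ↦ by
  simp [hx z, hy z]

lemma smul {c : k} (hc : σ (σ c) = c) (hx : IsHermitianVector B x) :
    IsHermitianVector B (c • x) := fun z ↦ by
  simp [hx z, hc]

lemma map_map_eq_of_smul {c : k} (hB : B.SeparatingRight) (hx : IsHermitianVector B x)
    (hx0 : x ≠ 0) (hc : IsHermitianVector B (c • x)) : σ (σ c) = c := by
  obtain ⟨y, hy⟩ : ∃ y, B y x ≠ 0 := by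
    by_contra! h
    exact hx0 (hB x h)
  have h : c * B y x = σ (σ c) * B y x := by simpa [← hx y] using hc y
  exact (mul_right_cancel₀ hy h).symm

lemma apply_ne_zero (hB : B.SeparatingRight) (hx : IsHermitianVector B x) (hx0 : x ≠ 0) :
    B x ≠ 0 := fun h ↦
  hx0 (hB x fun y ↦ by rw [hx y, h, LinearMap.zero_apply, map_zero])

end IsHermitianVector

lemma apply_eq_map_apply_of_basis (b : Basis ι k V) {y z : V}
    (h : ∀ i, B (b i) z = σ (B y (b i))) (x : V) : B x z = σ (B y x) := by
  exact LinearMap.congr_fun (b.ext h : B.flip z = σ.toSemilinearMap.comp (B y)) x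

/-- A basis in which the form `B` has the identity matrix, so that `x ↦ B x x` becomes the
Fermat form `∑ σ xᵢ * xᵢ`. -/
def IsOrthonormalBasis [DecidableEq ι] (B : V →ₛₗ[σ] V →ₗ[k] k) (b : Basis ι k V) : Prop :=
  ∀ i j, B (b i) (b j) = if i = j then 1 else 0

namespace IsOrthonormalBasis

variable [DecidableEq ι] {b : Basis ι k V}

lemma apply_basis_left (hb : IsOrthonormalBasis B b) (i : ι) (x : V) :
    B (b i) x = b.repr x i := by
  have h : B (b i) = b.coord i := b.ext fun j ↦ by
    simp [hb i j, Finsupp.single_apply, eq_comm]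
  exact LinearMap.congr_fun h x

lemma apply_basis_right (hb : IsOrthonormalBasis B b) (x : V) (i : ι) :
    B x (b i) = σ (b.repr x i) := by
  have h : B.flip (b i) = σ.toSemilinearMap.comp (b.coord i) := b.ext fun j ↦ by
    simp [hb j i, Finsupp.single_apply, apply_ite]
  exact LinearMap.congr_fun h x

lemma apply_eq_sum [Fintype ι] (hb : IsOrthonormalBasis B b) (x y : V) :
    B x y = ∑ i, σ (b.repr x i) * b.repr y i := by
  nth_rw 1 [← b.sum_repr x]
  rw [map_sum]
  simp [hb.apply_basis_left]

lemma isHermitianVector_iff (hb : IsOrthonormalBasis B b) {x : V} :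
    IsHermitianVector B x ↔ ∀ i, σ (σ (b.repr x i)) = b.repr x i := by
  refine ⟨fun hx i ↦ ?_, fun hx ↦ apply_eq_map_apply_of_basis b fun i ↦ ?_⟩
  · rw [← hb.apply_basis_right, ← hb.apply_basis_left, hx]
  · rw [hb.apply_basis_right, hb.apply_basis_left, hx]

end IsOrthonormalBasis

lemma apply_eq_zero_of_polarization {t : k} (ht : σ t ≠ t) {x y : V} (hx : B x x = 0)
    (hy : B y y = 0) (hadd : B (x + y) (x + y) = 0) (hsmul : B (x + t • y) (x + t • y) = 0) :
    B x y = 0 := by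
  simp only [map_add, LinearMap.add_apply, LinearMap.map_smulₛₗ, LinearMap.smul_apply, map_smul,
    smul_eq_mul, hx, hy, zero_add, add_zero, mul_zero] at hadd hsmul
  have hprod : (t - σ t) * B x y = 0 := by linear_combination hsmul - σ t * hadd
  exact (mul_eq_zero.mp hprod).resolve_left (sub_ne_zero.mpr ht.symm)

lemma apply_eq_zero_of_forall_apply_self_eq_zero [IsAlgClosed k] (hσ : IsFrobeniusPower σ q)
    {L : Submodule k V} (hL : ∀ x ∈ L, B x x = 0) {x y : V} (hx : x ∈ L) (hy : y ∈ L) :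
    B x y = 0 := by
  obtain ⟨t, -, ht⟩ := hσ.exists_map_map_eq_map_ne
  exact apply_eq_zero_of_polarization ht (hL x hx) (hL y hy) (hL _ (add_mem hx hy))
    (hL _ (add_mem hx (L.smul_mem t hy)))

lemma exists_linearEquiv_apply_eq_apply_basis [Finite ι] (hB : B.SeparatingRight)
    (b : Basis ι k V) : ∃ e : V ≃ₗ[k] ι → k, ∀ y i, e y i = B (b i) y := by
  have := Fintype.ofFinite ι
  have := b.finiteDimensional_of_finite
  let f : V →ₗ[k] ι → k := LinearMap.pi fun i ↦ B (b i)
  have hf : Function.Injective f := by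
    rw [injective_iff_map_eq_zero]
    intro y hy
    have hflip : B.flip y = 0 := b.ext fun i ↦ congrFun hy i
    exact hB y fun x ↦ LinearMap.congr_fun hflip x
  have hrank : finrank k V = finrank k (ι → k) := by
    rw [finrank_eq_card_basis b, finrank_fintype_fun_eq_card]
  exact ⟨LinearMap.linearEquivOfInjective f hf hrank, fun y i ↦ rfl⟩

variable [FiniteDimensional k V]

lemma separatingLeft_of_separatingRight (hB : B.SeparatingRight) : B.SeparatingLeft := by
  intro x hx
  let b := finBasis k V
  obtain ⟨e, he⟩ := exists_linearEquiv_apply_eq_apply_basis hB b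
  refine b.ext_elem fun i ↦ ?_
  have hdual (j) : B (b j) (e.symm (Pi.single i 1)) = if j = i then 1 else 0 := by
    rw [← he, e.apply_symm_apply, Pi.single_apply]
  have hxi := hx (e.symm (Pi.single i 1))
  rw [← b.sum_repr x, map_sum, LinearMap.sum_apply] at hxi
  simpa [hdual] using hxi

lemma exists_injective_apply_eq_map_apply (hB : B.SeparatingRight) :
    ∃ φ : V →ₛₗ[σ.comp σ] V, Function.Injective φ ∧ ∀ x y, B x (φ y) = σ (B y x) := by
  let b := finBasis k V
  obtain ⟨e, he⟩ := exists_linearEquiv_apply_eq_apply_basis hB b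
  let φ : V →ₛₗ[σ.comp σ] V :=
    { toFun y := e.symm fun i ↦ σ (B y (b i))
      map_add' y z := by
        rw [← map_add]
        congr 1
        ext i
        simp
      map_smul' c y := by
        rw [← map_smul]
        congr 1
        ext i
        simp }
  have hφ (x y : V) : B x (φ y) = σ (B y x) :=
    apply_eq_map_apply_of_basis b (fun i ↦ by simp [φ, ← he]) x
  refine ⟨φ, (injective_iff_map_eq_zero φ).mpr fun y hy ↦ ?_, hφ⟩
  refine separatingLeft_of_separatingRight hB y fun x ↦ ?_
  simpa [hy] using (hφ x y).symm

variable [IsAlgClosed k]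

theorem span_isHermitianVector_eq_top (hσ : IsFrobeniusPower σ q) (hB : B.SeparatingRight) :
    Submodule.span k {x | IsHermitianVector B x} = ⊤ := by
  obtain ⟨φ, hφinj, hφ⟩ := exists_injective_apply_eq_map_apply hB
  rw [← top_le_iff, ← span_fixed_eq_top hσ.comp hφinj]
  refine Submodule.span_mono fun x (hx : φ x = x) y ↦ ?_
  rw [← hφ y x, hx]

lemma exists_isHermitianVector_apply_self_ne_zero [Nontrivial V] (hσ : IsFrobeniusPower σ q)
    (hB : B.SeparatingRight) : ∃ x, IsHermitianVector B x ∧ B x x ≠ 0 := by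
  by_contra! h
  obtain ⟨t, htt, ht⟩ := hσ.exists_map_map_eq_map_ne
  have hspan := span_isHermitianVector_eq_top hσ hB
  have hzero : B = 0 := LinearMap.ext_on hspan fun x hx ↦ LinearMap.ext_on hspan fun y hy ↦
    apply_eq_zero_of_polarization ht (h x hx) (h y hy) (h _ (hx.add hy))
      (h _ (hx.add (hy.smul htt)))
  obtain ⟨y, hy⟩ := exists_ne (0 : V)
  exact hy (hB y fun x ↦ by simp [hzero])

lemma exists_isHermitianVector_apply_self_eq_one [Nontrivial V] (hσ : IsFrobeniusPower σ q)
    (hB : B.SeparatingRight) : ∃ x, IsHermitianVector B x ∧ B x x = 1 := by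
  obtain ⟨x, hx, hx0⟩ := exists_isHermitianVector_apply_self_ne_zero hσ hB
  obtain ⟨a, ha⟩ := hσ.exists_norm_eq (B x x)⁻¹
  have hfix : σ (B x x)⁻¹ = (B x x)⁻¹ := by rw [map_inv₀, ← hx x]
  refine ⟨a • x, hx.smul (map_map_eq_of_map_mul_self_eq hfix ha), ?_⟩
  simp only [LinearMap.map_smulₛₗ, LinearMap.smul_apply, map_smul, smul_eq_mul]
  rw [← mul_assoc, mul_comm a, ha, inv_mul_cancel₀ hx0]

theorem exists_isOrthonormalBasis (hσ : IsFrobeniusPower σ q) (hB : B.SeparatingRight) {n : ℕ}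
    (hn : finrank k V = n) : ∃ b : Basis (Fin n) k V, IsOrthonormalBasis B b := by
  induction n generalizing V with
  | zero => exact ⟨finBasisOfFinrankEq k V hn, fun i ↦ i.elim0⟩
  | succ n ih =>
    have : Nontrivial V := nontrivial_of_finrank_pos (n.succ_pos.trans_eq hn.symm)
    obtain ⟨x, hx, hxx⟩ := exists_isHermitianVector_apply_self_eq_one hσ hB
    let W : Submodule k V := LinearMap.ker (B x)
    have hW (z : V) : z + -(B x z) • x ∈ W := by simp [W, hxx]
    have hWrank : finrank k W = n := by
      have hne : B x ≠ 0 := fun h ↦ by simp [h] at hxx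
      exact Nat.succ_injective ((Dual.finrank_ker_add_one_of_ne_zero hne).trans hn)
    have hBW : (B.domRestrict₁₂ W W).SeparatingRight := by
      intro w hw
      refine Subtype.ext (hB w fun z ↦ ?_)
      have hz : B (z + -(B x z) • x) w = 0 := hw ⟨_, hW z⟩
      have hxw : B x w = 0 := w.2
      simpa [hxw] using hz
    obtain ⟨b, hb⟩ := ih hBW hWrank
    have hcons : ∀ c : k, ∀ w ∈ W, c • x + w = 0 → c = 0 := fun c w hw h ↦ by
      have hw : B x w = 0 := hw
      simpa [hxx, hw] using congrArg (B x) h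
    refine ⟨Basis.mkFinCons x b hcons fun z ↦ ⟨_, hW z⟩, ?_⟩
    have hxb (i) : B x (b i) = 0 := (b i).2
    have hbx (i) : B (b i) x = 0 := by rw [hx, hxb, map_zero]
    have hbb (i j) : B (b i) (b j) = if i = j then 1 else 0 := hb i j
    intro i j
    refine Fin.cases ?_ (fun i ↦ ?_) i <;> refine Fin.cases ?_ (fun j ↦ ?_) j <;>
      simp [hxx, hxb, hbx, hbb, Fin.succ_ne_zero, (Fin.succ_ne_zero _).symm]

end SesquilinearForm

section Counting

variable {k V ι : Type*} [Field k] {σ : k →+* k} {q : ℕ}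

/-- The zeros of the Fermat form `∑ σ xᵢ * xᵢ` with coordinates in the subfield fixed by `σ ∘ σ`. -/
abbrev FermatZeros (ι : Type*) [Fintype ι] (σ : k →+* k) : Type _ :=
  {x : ι → fixedSubfield (σ.comp σ) // ∑ i, σ (x i) * x i = 0}

/-- Splitting off the first coordinate of a zero of the Fermat form. -/
def fermatZerosSuccEquiv (n : ℕ) (σ : k →+* k) :
    FermatZeros (Fin (n + 1)) σ ≃ Σ x : Fin n → fixedSubfield (σ.comp σ),
      {a : fixedSubfield (σ.comp σ) // σ a * a = -∑ i, σ (x i) * x i} where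
  toFun x := ⟨Fin.tail x.1, x.1 0, eq_neg_of_add_eq_zero_left <|
    (Fin.sum_univ_succ fun i ↦ σ (x.1 i) * x.1 i).symm.trans x.2⟩
  invFun x := ⟨Fin.cons x.2 x.1, by
    rw [Fin.sum_univ_succ]
    simp [x.2.2]⟩
  left_inv x := Subtype.ext (Fin.cons_self_tail x.1)
  right_inv _ := rfl

section

variable [IsAlgClosed k]

lemma card_norm_eq_fixedSubfield [DecidableEq k] (hσ : IsFrobeniusPower σ q) {b : k}
    (hb : σ b = b) :
    Nat.card {a : fixedSubfield (σ.comp σ) // σ a * a = b} = if b = 0 then 1 else q + 1 := by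
  calc Nat.card {a : fixedSubfield (σ.comp σ) // σ a * a = b}
      = {a : fixedSubfield (σ.comp σ) | σ a * a = b}.ncard := Nat.card_coe_set_eq _
    _ = (Subtype.val '' {a : fixedSubfield (σ.comp σ) | σ a * a = b}).ncard :=
      Subtype.val_injective.injOn.ncard_image.symm
    _ = {a | σ a * a = b}.ncard := by
      congr 1
      ext a
      simpa using fun h ↦ map_map_eq_of_map_mul_self_eq hb h
    _ = if b = 0 then 1 else q + 1 := by
      split_ifs with hb0
      · simp [hb0]
      · exact hσ.ncard_norm_eq hb0

lemma card_fermatZeros_succ (hσ : IsFrobeniusPower σ q) (n : ℕ) :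
    Nat.card (FermatZeros (Fin (n + 1)) σ) + q * Nat.card (FermatZeros (Fin n) σ) =
      (q + 1) * q ^ (2 * n) := by
  classical
  have := hσ.comp.finite_fixedSubfield
  have := Fintype.ofFinite (fixedSubfield (σ.comp σ))
  have hfix (x : Fin n → fixedSubfield (σ.comp σ)) :
      σ (-∑ i, σ (x i) * x i) = -∑ i, σ (x i) * x i := by
    have hx (i) : σ (σ (x i)) = x i := (x i).2
    simp [hx, mul_comm]
  rw [Nat.card_congr (fermatZerosSuccEquiv n σ), Nat.card_sigma, Nat.card_eq_fintype_card,
    Fintype.card_subtype, Finset.card_filter, Finset.mul_sum, ← Finset.sum_add_distrib]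
  calc _ = ∑ x : Fin n → fixedSubfield (σ.comp σ), (q + 1) := by
        refine Finset.sum_congr rfl fun x _ ↦ ?_
        rw [card_norm_eq_fixedSubfield hσ (hfix x), neg_eq_zero]
        split_ifs <;> ring
    _ = (q + 1) * q ^ (2 * n) := by
        rw [Finset.sum_const, Finset.card_univ, ← Nat.card_eq_fintype_card, Nat.card_fun,
          hσ.comp.card_fixedSubfield, Nat.card_fin, ← pow_mul, smul_eq_mul, mul_comm]

lemma mul_card_fermatZeros (hσ : IsFrobeniusPower σ q) (n : ℕ) :
    (q * Nat.card (FermatZeros (Fin n) σ) : ℤ) = q ^ (2 * n) + (-1) ^ n * (q - 1) * q ^ n := by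
  induction n with
  | zero => simp
  | succ n ih =>
    have hrec : (Nat.card (FermatZeros (Fin (n + 1)) σ) +
        q * Nat.card (FermatZeros (Fin n) σ) : ℤ) = (q + 1) * q ^ (2 * n) :=
      mod_cast card_fermatZeros_succ hσ n
    linear_combination q * hrec - q * ih

lemma card_fermatZeros_four (hσ : IsFrobeniusPower σ q) :
    Nat.card (FermatZeros (Fin 4) σ) = (q ^ 3 + 1) * (q ^ 2 + 1) * (q ^ 2 - 1) + 1 := by
  have h := mul_card_fermatZeros hσ 4
  have hq : (q : ℤ) ≠ 0 := mod_cast Nat.ne_zero_of_lt hσ.one_lt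
  have hq2 : 1 ≤ q ^ 2 := Nat.one_le_pow _ _ (Nat.zero_lt_of_lt hσ.one_lt)
  zify [hq2]
  exact mul_left_cancel₀ hq (by linear_combination h)

end

variable [AddCommGroup V] [Module k V] {B : V →ₛₗ[σ] V →ₗ[k] k}

/-- The isotropic Hermitian vectors correspond, in the coordinates of an orthonormal basis, to the
zeros of the Fermat form. -/
noncomputable def isotropicHermitianEquiv [Fintype ι] [DecidableEq ι] {b : Basis ι k V}
    (hb : IsOrthonormalBasis B b) :
    {x // IsHermitianVector B x ∧ B x x = 0} ≃ FermatZeros ι σ :=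
  have hrepr (y : ι → k) (i : ι) : b.repr (b.equivFun.symm y) i = y i :=
    congrFun (b.equivFun.apply_symm_apply y) i
  { toFun x := ⟨fun i ↦ ⟨b.repr x i, hb.isHermitianVector_iff.mp x.2.1 i⟩, by
      rw [← hb.apply_eq_sum, x.2.2]⟩
    invFun y := ⟨b.equivFun.symm fun i ↦ y.1 i,
      hb.isHermitianVector_iff.mpr fun i ↦ by rw [hrepr]; exact (y.1 i).2,
      by simpa only [hb.apply_eq_sum, hrepr] using y.2⟩
    left_inv x := Subtype.ext (b.equivFun.symm_apply_apply x.1)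
    right_inv y := by
      ext i
      exact hrepr _ i }

/-- The points of the hypersurface `B x x = 0` that are spanned by a Hermitian vector. -/
def hermitianPoints (B : V →ₛₗ[σ] V →ₗ[k] k) : Set (Submodule k V) :=
  {c | ∃ v ≠ 0, IsHermitianVector B v ∧ B v v = 0 ∧ c = Submodule.span k {v}}

lemma card_isotropicHermitian_ne_zero [IsAlgClosed k] (hσ : IsFrobeniusPower σ q)
    (hB : B.SeparatingRight) :
    Nat.card {x // x ≠ 0 ∧ IsHermitianVector B x ∧ B x x = 0} =
      (hermitianPoints B).ncard * (q ^ 2 - 1) := by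
  choose v hv0 hv hvv hvc using fun c : hermitianPoints B ↦ c.2
  let f (p : hermitianPoints B × (fixedSubfield (σ.comp σ))ˣ) :
      {x // x ≠ 0 ∧ IsHermitianVector B x ∧ B x x = 0} :=
    ⟨(p.2 : k) • v p.1, smul_ne_zero (by simp) (hv0 p.1), (hv p.1).smul p.2.1.2, by simp [hvv]⟩
  have hf : Function.Bijective f := by
    refine ⟨fun ⟨c, u⟩ ⟨d, w⟩ h ↦ ?_, fun ⟨x, hx0, hx, hxx⟩ ↦ ?_⟩
    · have huw : (u : k) • v c = (w : k) • v d := congrArg Subtype.val h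
      obtain rfl : c = d := Subtype.ext <| by
        rw [hvc c, hvc d, ← Submodule.span_singleton_smul_eq (r := (u : k)) (by simp), huw,
          Submodule.span_singleton_smul_eq (by simp)]
      exact congrArg _ (Units.ext (Subtype.ext (smul_left_injective k (hv0 c) huw)))
    · let c : hermitianPoints B := ⟨Submodule.span k {x}, x, hx0, hx, hxx, rfl⟩
      obtain ⟨a, hax⟩ : ∃ a : k, a • v c = x :=
        Submodule.mem_span_singleton.mp (hvc c ▸ Submodule.mem_span_singleton_self x)
      have ha0 : a ≠ 0 := fun h ↦ hx0 (by rw [← hax, h, zero_smul])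
      have ha : σ (σ a) = a := (hv c).map_map_eq_of_smul hB (hv0 c) (hax ▸ hx)
      exact ⟨⟨c, Units.mk0 ⟨a, ha⟩ fun h ↦ ha0 (congrArg Subtype.val h)⟩, Subtype.ext hax⟩
  rw [← Nat.card_congr (Equiv.ofBijective f hf), Nat.card_prod, Nat.card_units,
    hσ.comp.card_fixedSubfield, Nat.card_coe_set_eq]

theorem ncard_hermitianPoints [IsAlgClosed k] (hσ : IsFrobeniusPower σ q) (hB : B.SeparatingRight)
    (hV : finrank k V = 4) : (hermitianPoints B).ncard = (q ^ 3 + 1) * (q ^ 2 + 1) := by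
  have : FiniteDimensional k V := .of_finrank_pos (by lia)
  have : Finite (fixedSubfield (σ.comp σ)) := hσ.comp.finite_fixedSubfield
  obtain ⟨b, hb⟩ := exists_isOrthonormalBasis hσ hB hV
  let e := isotropicHermitianEquiv hb
  let S : Set V := {x | IsHermitianVector B x ∧ B x x = 0}
  have hS : S.ncard = (q ^ 3 + 1) * (q ^ 2 + 1) * (q ^ 2 - 1) + 1 := by
    rw [← card_fermatZeros_four hσ, ← Nat.card_congr e, ← Nat.card_coe_set_eq]
    rfl
  have hdiff : (S \ {0}).ncard = (hermitianPoints B).ncard * (q ^ 2 - 1) := by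
    rw [← card_isotropicHermitian_ne_zero hσ hB, ← Nat.card_coe_set_eq]
    exact Nat.card_congr (Equiv.subtypeEquivRight fun x ↦ and_comm)
  have h0 : (0 : V) ∈ S := ⟨fun y ↦ by simp, by simp⟩
  have hfin : S.Finite := Finite.of_equiv _ e.symm
  rw [← Set.ncard_sdiff_singleton_add_one h0 hfin, hdiff, add_left_inj] at hS
  exact Nat.eq_of_mul_eq_mul_right (Nat.sub_pos_of_lt hσ.comp.one_lt) hS

end Counting

section LinesThroughPoint

variable {k V : Type*} [Field k] [AddCommGroup V] [Module k V]

lemma bijOn_span_singleton_sup [FiniteDimensional k V] {c : V} (hc : c ≠ 0) {W : Submodule k V}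
    (hcW : Disjoint (Submodule.span k {c}) W) (n : ℕ) :
    Set.BijOn (fun P : Submodule k W ↦ Submodule.span k {c} ⊔ P.map W.subtype)
      {P | finrank k P = n}
      {L | finrank k L = n + 1 ∧ Submodule.span k {c} ≤ L ∧ L ≤ Submodule.span k {c} ⊔ W} := by
  have hrank (Q : Submodule k V) (hQ : Q ≤ W) :
      finrank k ↥(Submodule.span k {c} ⊔ Q) = finrank k Q + 1 := by
    have := Submodule.finrank_sup_add_finrank_inf_eq (Submodule.span k {c}) Q
    rwa [(hcW.mono_right hQ).eq_bot, finrank_bot, finrank_span_singleton hc, add_zero,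
      add_comm] at this
  have hinf (P : Submodule k W) :
      (Submodule.span k {c} ⊔ P.map W.subtype) ⊓ W = P.map W.subtype := by
    rw [sup_comm, sup_inf_assoc_of_le _ (W.map_subtype_le P), hcW.eq_bot, sup_bot_eq]
  refine ⟨fun P hP ↦ ⟨?_, le_sup_left, sup_le_sup_left (W.map_subtype_le P) _⟩,
    fun P _ Q _ h ↦ ?_, fun L ⟨hL, hcL, hLW⟩ ↦ ?_⟩
  · rw [hrank _ (W.map_subtype_le P), Submodule.finrank_map_subtype_eq, hP]
  · exact Submodule.map_injective_of_injective W.injective_subtype <|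
      (hinf P).symm.trans ((congrArg (· ⊓ W) h).trans (hinf Q))
  · have hLsup : Submodule.span k {c} ⊔ W ⊓ L = L := by
      rw [← sup_inf_assoc_of_le _ hcL, inf_eq_right.mpr hLW]
    refine ⟨L.comap W.subtype, ?_, by simp only [Submodule.map_comap_subtype, hLsup]⟩
    have hWL := hrank (W ⊓ L) inf_le_left
    rw [hLsup, hL, add_left_inj, ← Submodule.map_comap_subtype,
      Submodule.finrank_map_subtype_eq] at hWL
    exact hWL.symm

lemma eq_inf_of_finrank_eq_two {P L M : Submodule k V} (hP : finrank k P = 1)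
    (hL : finrank k L = 2) (hM : finrank k M = 2) (hLM : L ≠ M) (hPL : P ≤ L) (hPM : P ≤ M) :
    P = L ⊓ M := by
  have : FiniteDimensional k L := .of_finrank_pos (by lia)
  have : FiniteDimensional k M := .of_finrank_pos (by lia)
  have hne : L ⊓ M ≠ L := fun h ↦
    hLM (Submodule.eq_of_le_of_finrank_eq (inf_eq_left.mp h) (hL.trans hM.symm))
  have hlt := Submodule.finrank_lt_finrank_of_lt (inf_le_left.lt_of_ne hne)
  exact Submodule.eq_of_le_of_finrank_le (le_inf hPL hPM) (by lia)

variable {σ : k →+* k} {q : ℕ} {B : V →ₛₗ[σ] V →ₗ[k] k}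

/-- The lines through the point `P` lying on the hypersurface `B x x = 0`. -/
def isotropicLinesThrough (B : V →ₛₗ[σ] V →ₗ[k] k) (P : Submodule k V) : Set (Submodule k V) :=
  {L | finrank k L = 2 ∧ (∀ x ∈ L, B x x = 0) ∧ P ≤ L}

lemma separatingRight_domRestrict₁₂_of_disjoint {c : V} (hB : B.SeparatingRight) (hc0 : c ≠ 0)
    (hc : IsHermitianVector B c) {W : Submodule k V} (hcW : Disjoint (Submodule.span k {c}) W)
    (hker : Submodule.span k {c} ⊔ W = LinearMap.ker (B c)) :
    (B.domRestrict₁₂ W W).SeparatingRight := by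
  intro w hw
  have hwc : B c (w : V) = 0 :=
    (le_sup_right.trans hker.le : W ≤ LinearMap.ker (B c)) w.2
  have hflip : LinearMap.ker (B c) ≤ LinearMap.ker (B.flip w) := by
    rw [← hker, sup_le_iff, Submodule.span_singleton_le_iff_mem]
    exact ⟨hwc, fun x hx ↦ hw ⟨x, hx⟩⟩
  obtain ⟨y, hy⟩ := LinearMap.surjective (hc.apply_ne_zero hB hc0) 1
  have hw_eq : (w : V) = B y w • c := by
    refine sub_eq_zero.mp (hB _ fun z ↦ ?_)
    have hz : B (z - B c z • y) w = 0 := hflip (by simp [hy])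
    rw [map_sub, map_smul, hc z, smul_eq_mul, mul_comm]
    simpa using hz
  exact Subtype.ext <| Submodule.disjoint_def.mp hcW w
    (hw_eq ▸ Submodule.smul_mem _ _ (Submodule.mem_span_singleton_self c)) w.2

lemma apply_smul_add_self_of_isHermitianVector {c w : V} (hc : IsHermitianVector B c)
    (hcc : B c c = 0) (hcw : B c w = 0) (a : k) : B (a • c + w) (a • c + w) = B w w := by
  simp [hcc, hcw, hc w]

lemma IsOrthonormalBasis.bijOn_isotropic_points {b : Basis (Fin 2) k V}
    (hb : IsOrthonormalBasis B b) :
    Set.BijOn (fun t : k ↦ Submodule.span k {b 0 + t • b 1}) {t | σ t * t = -1}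
      {P | finrank k P = 1 ∧ ∀ x ∈ P, B x x = 0} := by
  have hform (x y : k) : B (x • b 0 + y • b 1) (x • b 0 + y • b 1) = σ x * x + σ y * y := by
    simp [hb _ _]
  have hne (t : k) : b 0 + t • b 1 ≠ 0 := fun h ↦ by
    simpa [hb _ _] using congrArg (B (b 0)) h
  refine ⟨fun t ht ↦ ⟨finrank_span_singleton (hne t), fun x hx ↦ ?_⟩, fun s _ t _ h ↦ ?_,
    fun P ⟨hP, hPB⟩ ↦ ?_⟩
  · obtain ⟨a, rfl⟩ := Submodule.mem_span_singleton.mp hx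
    have ht : σ t * t = -1 := ht
    rw [smul_add, smul_smul, hform, map_mul]
    linear_combination σ a * a * ht
  · have h : Submodule.span k {b 0 + s • b 1} = Submodule.span k {b 0 + t • b 1} := h
    obtain ⟨a, ha⟩ := Submodule.mem_span_singleton.mp
      (h ▸ Submodule.mem_span_singleton_self (b 0 + s • b 1))
    have ha1 : a = 1 := by simpa [hb _ _] using congrArg (B (b 0)) ha
    simpa [hb _ _, ha1] using (congrArg (B (b 1)) ha).symm
  · obtain ⟨v, hv0, rfl⟩ := (atom_iff_nonzero_span P).mp
      (Submodule.isAtom_iff_finrank_eq_one.mpr hP)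
    have hv := hPB v (Submodule.mem_span_singleton_self v)
    obtain ⟨x, y, rfl⟩ : ∃ x y : k, v = x • b 0 + y • b 1 :=
      ⟨_, _, by rw [← Fin.sum_univ_two fun i ↦ b.repr v i • b i, b.sum_repr]⟩
    rw [hform] at hv
    have hx : x ≠ 0 := by
      rintro rfl
      have hy : y = 0 := by simpa using hv
      exact hv0 (by simp [hy])
    have hsmul : x⁻¹ • (x • b 0 + y • b 1) = b 0 + (x⁻¹ * y) • b 1 := by
      simp [smul_smul, hx]
    refine ⟨x⁻¹ * y, ?_, ?_⟩
    · have hσx : σ x ≠ 0 := by simpa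
      simp only [Set.mem_ofPred_eq, map_mul, map_inv₀]
      field_simp
      linear_combination hv
    · simp only [← hsmul, Submodule.span_singleton_smul_eq (inv_ne_zero hx).isUnit]

lemma finrank_eq_one_of_mem_hermitianPoints {P : Submodule k V} (hP : P ∈ hermitianPoints B) :
    finrank k P = 1 := by
  obtain ⟨c, hc0, -, -, rfl⟩ := hP
  exact finrank_span_singleton hc0

variable [IsAlgClosed k]

lemma ncard_isotropic_points_of_finrank_eq_two (hσ : IsFrobeniusPower σ q)
    (hB : B.SeparatingRight) (hV : finrank k V = 2) :
    {P : Submodule k V | finrank k P = 1 ∧ ∀ x ∈ P, B x x = 0}.ncard = q + 1 := by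
  have : FiniteDimensional k V := .of_finrank_pos (by lia)
  obtain ⟨b, hb⟩ := exists_isOrthonormalBasis hσ hB hV
  rw [← hb.bijOn_isotropic_points.ncard_eq, hσ.ncard_norm_eq (neg_ne_zero.mpr one_ne_zero)]

lemma exists_smul_isHermitianVector [FiniteDimensional k V] (hσ : IsFrobeniusPower σ q)
    (hB : B.SeparatingRight) {c : V} (hc : c ≠ 0) (h : ∀ y, B c y = 0 → B y c = 0) :
    ∃ ν : k, ν ≠ 0 ∧ IsHermitianVector B (ν • c) := by
  -- The kernels agree, so `B · c` is `σ ∘ B c` up to a scalar `μ`, which rescaling `c` absorbs.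
  obtain ⟨y, hy⟩ : ∃ y, B c y = 1 := by
    refine (LinearMap.surjective fun h0 ↦ hc ?_) 1
    exact separatingLeft_of_separatingRight hB c fun y ↦ by rw [h0, LinearMap.zero_apply]
  have hyc (z : V) : B z c = σ (B c z) * B y c := by
    have := h (z - B c z • y) (by simp [hy])
    simpa [sub_eq_zero] using this
  have hμ : B y c ≠ 0 := fun h0 ↦ hc (hB c fun z ↦ by rw [hyc, h0, mul_zero])
  obtain ⟨ν, hν0, hν⟩ := hσ.comp.exists_ne_zero_map_eq_mul hμ
  refine ⟨ν, hν0, fun z ↦ ?_⟩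
  have hν : σ (σ ν) = ν * B y c := hν
  simp only [map_smul, LinearMap.map_smulₛₗ, LinearMap.smul_apply, smul_eq_mul, map_mul, hν, hyc z]
  ring

lemma le_ker_of_mem_isotropicLinesThrough (hσ : IsFrobeniusPower σ q) {c : V}
    {L : Submodule k V} (hL : L ∈ isotropicLinesThrough B (Submodule.span k {c})) :
    L ≤ LinearMap.ker (B c) ∧ L ≤ LinearMap.ker (B.flip c) := by
  obtain ⟨-, hLB, hcL⟩ := hL
  have hc : c ∈ L := hcL (Submodule.mem_span_singleton_self c)
  exact ⟨fun x hx ↦ apply_eq_zero_of_forall_apply_self_eq_zero hσ hLB hc hx,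
    fun x hx ↦ apply_eq_zero_of_forall_apply_self_eq_zero hσ hLB hx hc⟩

theorem mem_hermitianPoints_of_mem_isotropicLinesThrough (hσ : IsFrobeniusPower σ q)
    (hB : B.SeparatingRight) (hV : finrank k V = 4) {P L M : Submodule k V}
    (hP : finrank k P = 1) (hL : L ∈ isotropicLinesThrough B P)
    (hM : M ∈ isotropicLinesThrough B P) (hLM : L ≠ M) : P ∈ hermitianPoints B := by
  have : FiniteDimensional k V := .of_finrank_pos (by lia)
  obtain ⟨c, hc0, rfl⟩ := (atom_iff_nonzero_span P).mp
      (Submodule.isAtom_iff_finrank_eq_one.mpr hP)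
  obtain ⟨hLl, hLr⟩ := le_ker_of_mem_isotropicLinesThrough hσ hL
  obtain ⟨hMl, hMr⟩ := le_ker_of_mem_isotropicLinesThrough hσ hM
  have hBc : B c ≠ 0 := fun h ↦
    hc0 (separatingLeft_of_separatingRight hB c fun y ↦ by rw [h, LinearMap.zero_apply])
  have hker : L ⊔ M = LinearMap.ker (B c) := by
    have hinf := eq_inf_of_finrank_eq_two hP hL.1 hM.1 hLM hL.2.2 hM.2.2
    have hsup := Submodule.finrank_sup_add_finrank_inf_eq L M
    rw [← hinf, hP, hL.1, hM.1] at hsup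
    have hrank := Dual.finrank_ker_add_one_of_ne_zero hBc
    exact Submodule.eq_of_le_of_finrank_eq (sup_le hLl hMl) (by lia)
  obtain ⟨ν, hν0, hν⟩ := exists_smul_isHermitianVector hσ hB hc0 fun y hy ↦
    (hker.ge.trans (sup_le hLr hMr) : LinearMap.ker (B c) ≤ LinearMap.ker (B.flip c)) hy
  have hcc : B c c = 0 := hL.2.1 c (hL.2.2 (Submodule.mem_span_singleton_self c))
  exact ⟨ν • c, smul_ne_zero hν0 hc0, hν, by simp [hcc],
    (Submodule.span_singleton_smul_eq (IsUnit.mk0 ν hν0) c).symm⟩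

lemma bijOn_isotropicLinesThrough [FiniteDimensional k V] (hσ : IsFrobeniusPower σ q) {c : V}
    (hc0 : c ≠ 0) (hc : IsHermitianVector B c) (hcc : B c c = 0) {W : Submodule k V}
    (hcW : Disjoint (Submodule.span k {c}) W)
    (hker : Submodule.span k {c} ⊔ W = LinearMap.ker (B c)) :
    Set.BijOn (fun P : Submodule k W ↦ Submodule.span k {c} ⊔ P.map W.subtype)
      {P | finrank k P = 1 ∧ ∀ x ∈ P, B.domRestrict₁₂ W W x x = 0}
      (isotropicLinesThrough B (Submodule.span k {c})) := by
  have hiso (P : Submodule k W) : (∀ x ∈ P, B.domRestrict₁₂ W W x x = 0) ↔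
      ∀ x ∈ Submodule.span k {c} ⊔ P.map W.subtype, B x x = 0 := by
    refine ⟨fun h x hx ↦ ?_, fun h x hx ↦
      h x (Submodule.mem_sup_right (Submodule.mem_map_of_mem hx))⟩
    obtain ⟨_, hac, _, ⟨w, hw, rfl⟩, rfl⟩ := Submodule.mem_sup.mp hx
    obtain ⟨a, rfl⟩ := Submodule.mem_span_singleton.mp hac
    have hcw : B c (w : V) = 0 := (le_sup_right.trans hker.le : W ≤ LinearMap.ker (B c)) w.2
    exact (apply_smul_add_self_of_isHermitianVector hc hcc hcw a).trans (h w hw)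
  have hsub : isotropicLinesThrough B (Submodule.span k {c}) ⊆
      {L | finrank k L = 1 + 1 ∧ Submodule.span k {c} ≤ L ∧ L ≤ Submodule.span k {c} ⊔ W} :=
    fun L hL ↦ ⟨hL.1, hL.2.2, hker ▸ (le_ker_of_mem_isotropicLinesThrough hσ hL).1⟩
  have hbij := bijOn_span_singleton_sup hc0 hcW 1
  convert hbij.subset_right hsub using 1
  ext P
  exact ⟨fun ⟨hP, hPB⟩ ↦ ⟨hP, (hbij.mapsTo hP).1, (hiso P).mp hPB, le_sup_left⟩,
    fun ⟨hP, hPB⟩ ↦ ⟨hP, (hiso P).mpr hPB.2.1⟩⟩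

theorem ncard_isotropicLinesThrough (hσ : IsFrobeniusPower σ q) (hB : B.SeparatingRight)
    (hV : finrank k V = 4) {P : Submodule k V} (hP : P ∈ hermitianPoints B) :
    (isotropicLinesThrough B P).ncard = q + 1 := by
  have : FiniteDimensional k V := .of_finrank_pos (by lia)
  obtain ⟨c, hc0, hc, hcc, rfl⟩ := hP
  obtain ⟨W, hcW, hker⟩ := IsModularLattice.exists_disjoint_and_sup_eq
    (show Submodule.span k {c} ≤ LinearMap.ker (B c) by simpa using hcc)
  have hW : finrank k W = 2 := by
    have hsup := Submodule.finrank_sup_add_finrank_inf_eq (Submodule.span k {c}) W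
    rw [hker, hcW.eq_bot, finrank_bot, finrank_span_singleton hc0] at hsup
    have hrank := Dual.finrank_ker_add_one_of_ne_zero (hc.apply_ne_zero hB hc0)
    lia
  rw [← (bijOn_isotropicLinesThrough hσ hc0 hc hcc hcW hker).ncard_eq]
  exact ncard_isotropic_points_of_finrank_eq_two hσ
    (separatingRight_domRestrict₁₂_of_disjoint hB hc0 hc hcW hker) hW

lemma injOn_isotropicLinesThrough (hσ : IsFrobeniusPower σ q) (hB : B.SeparatingRight)
    (hV : finrank k V = 4) : Set.InjOn (isotropicLinesThrough B) (hermitianPoints B) := by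
  intro P hP Q hQ h
  have hcard : 1 < (isotropicLinesThrough B P).ncard := by
    rw [ncard_isotropicLinesThrough hσ hB hV hP]
    exact Nat.succ_lt_succ (Nat.zero_lt_of_lt hσ.one_lt)
  obtain ⟨⟨L, hL, M, hM, hLM⟩, -⟩ := Set.one_lt_ncard_iff_nontrivial_and_finite.mp hcard
  have hinf {R : Submodule k V} (hR : R ∈ hermitianPoints B) (hRL : R ≤ L) (hRM : R ≤ M) :
      R = L ⊓ M :=
    eq_inf_of_finrank_eq_two (finrank_eq_one_of_mem_hermitianPoints hR) hL.1 hM.1 hLM hRL hRM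
  rw [hinf hP hL.2.2 hM.2.2, hinf hQ (h ▸ hL).2.2 (h ▸ hM).2.2]

end LinesThroughPoint

section ExtremalSurface

variable {k n : Type*} [Field k] [Fintype n] [DecidableEq n] {σ : k →+* k} {q : ℕ}

/-- The sesquilinear form `∑ A i j * σ (x i) * y j`, whose values `B x x` on the diagonal are those
of the Frobenius form of `A` when `σ` is the `q`-th power map. -/
noncomputable def frobeniusSesqForm (σ : k →+* k) (A : Matrix n n k) :
    (n → k) →ₛₗ[σ] (n → k) →ₗ[k] k :=
  A.toLinearMapₛₗ₂' k σ (RingHom.id k)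

lemma frobeniusSesqForm_apply (A : Matrix n n k) (x y : n → k) :
    frobeniusSesqForm σ A x y = ∑ i, ∑ j, A i j * σ (x i) * y j := by
  simp only [frobeniusSesqForm, Matrix.toLinearMapₛₗ₂'_apply, RingHom.id_apply, smul_eq_mul]
  exact Finset.sum_congr rfl fun i _ ↦ Finset.sum_congr rfl fun j _ ↦ by ring

lemma separatingRight_frobeniusSesqForm {A : Matrix n n k} (hA : IsUnit A) :
    (frobeniusSesqForm σ A).SeparatingRight := by
  intro y hy
  have hAy : A.mulVec y = 0 := funext fun i ↦ by
    simpa [frobeniusSesqForm_apply, Pi.single_apply, apply_ite σ, Matrix.mulVec, dotProduct]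
      using hy (Pi.single i 1)
  exact Matrix.mulVec_injective_of_isUnit hA (hAy.trans A.mulVec_zero.symm)

variable {A : Matrix (Fin 4) (Fin 4) k}

lemma mem_isotropicLinesThrough_iff (hσ : IsFrobeniusPower σ q)
    {L P : Submodule k (Fin 4 → k)} :
    L ∈ isotropicLinesThrough (frobeniusSesqForm σ A) P ↔
      IsLineOn (extremalCone k q A) L ∧ P ≤ L := by
  have hform (x : Fin 4 → k) : frobeniusSesqForm σ A x x = frobForm q A x := by
    simp [frobeniusSesqForm_apply, frobForm, hσ.map_eq_pow]
  simp only [isotropicLinesThrough, IsLineOn, IsLine, extremalCone, Set.mem_ofPred_eq, and_assoc,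
    Set.subset_def, SetLike.mem_coe, hform]

variable [IsAlgClosed k]

theorem isStarAt_iff (hσ : IsFrobeniusPower σ q) (hA : IsUnit A)
    {S : Set (Submodule k (Fin 4 → k))} {P : Submodule k (Fin 4 → k)} :
    IsStarAt q (extremalCone k q A) S P ↔ P ∈ hermitianPoints (frobeniusSesqForm σ A) ∧
      S = isotropicLinesThrough (frobeniusSesqForm σ A) P := by
  have hB := separatingRight_frobeniusSesqForm (σ := σ) hA
  have hV : finrank k (Fin 4 → k) = 4 := finrank_fin_fun k
  simp only [IsStarAt, IsPoint, ← mem_isotropicLinesThrough_iff hσ]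
  refine ⟨fun ⟨hP, hS, hSP⟩ ↦ ?_, fun ⟨hP, hS⟩ ↦ ?_⟩
  · have hcard : 1 < S.ncard := by
      rw [hS]
      exact Nat.succ_lt_succ (Nat.zero_lt_of_lt hσ.one_lt)
    obtain ⟨⟨L, hL, M, hM, hLM⟩, -⟩ := Set.one_lt_ncard_iff_nontrivial_and_finite.mp hcard
    have hPB := mem_hermitianPoints_of_mem_isotropicLinesThrough hσ hB hV hP (hSP L hL)
      (hSP M hM) hLM
    have hlines := ncard_isotropicLinesThrough hσ hB hV hPB
    exact ⟨hPB, Set.eq_of_subset_of_ncard_le hSP (hlines.trans hS.symm).le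
      (Set.finite_of_ncard_ne_zero (hlines.trans_ne q.succ_ne_zero))⟩
  · subst hS
    exact ⟨finrank_eq_one_of_mem_hermitianPoints hP, ncard_isotropicLinesThrough hσ hB hV hP,
      fun L hL ↦ hL⟩

theorem isStarPoint_iff (hσ : IsFrobeniusPower σ q) (hA : IsUnit A)
    {P : Submodule k (Fin 4 → k)} :
    IsStarPoint q (extremalCone k q A) P ↔ P ∈ hermitianPoints (frobeniusSesqForm σ A) := by
  simp only [IsStarPoint, isStarAt_iff hσ hA, exists_and_left, exists_eq, and_true]

theorem isStar_iff (hσ : IsFrobeniusPower σ q) (hA : IsUnit A)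
    {S : Set (Submodule k (Fin 4 → k))} :
    IsStar q (extremalCone k q A) S ↔ S ∈ isotropicLinesThrough (frobeniusSesqForm σ A) ''
      hermitianPoints (frobeniusSesqForm σ A) := by
  simp only [IsStar, isStarAt_iff hσ hA, Set.mem_image, eq_comm]

end ExtremalSurface

/-- A smooth extremal surface `X` of degree `q+1` in ℙ³(k)
has exactly `(q³+1)(q²+1) = q⁵+q³+q²+1` stars; equivalently (each star point
being the center of exactly one star) exactly `(q³+1)(q²+1)` star points. -/
theorem count_stars {k : Type*} [Field k] [IsAlgClosed k]
    (p e q : ℕ) (hp : p.Prime) (hchar : CharP k p) (he : 1 ≤ e) (hq : q = p ^ e)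
    (A : Matrix (Fin 4) (Fin 4) k) (hA : IsUnit A) :
    {S : Set (Submodule k (Fin 4 → k)) | IsStar q (extremalCone k q A) S}.ncard
        = (q ^ 3 + 1) * (q ^ 2 + 1) ∧
    {c : Submodule k (Fin 4 → k) | IsStarPoint q (extremalCone k q A) c}.ncard
        = (q ^ 3 + 1) * (q ^ 2 + 1) := by
  have : Fact p.Prime := ⟨hp⟩
  have hσ : IsFrobeniusPower (iterateFrobenius k p e) q :=
    hq ▸ isFrobeniusPower_iterateFrobenius p (Nat.one_le_iff_ne_zero.mp he)
  have hB := separatingRight_frobeniusSesqForm (σ := iterateFrobenius k p e) hA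
  have hV : finrank k (Fin 4 → k) = 4 := finrank_fin_fun k
  have hpoints := ncard_hermitianPoints hσ hB hV
  simp only [isStar_iff hσ hA, isStarPoint_iff hσ hA, Set.ofPred_mem_eq]
  exact ⟨(injOn_isotropicLinesThrough hσ hB hV).ncard_image.trans hpoints, hpoints⟩
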